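/- Let n ≥ 2 and let S ⊆ so(n,ℂ) be Ad-invariant, i.e. gXg⁻¹ ∈ S for every X ∈ S and every g ∈ SO(n,ℂ). Let h ∈ ℝ, let R : so(n) → so(n) be selfadjoint with R ∈ C(S,h), and let v ∈ S satisfy R(v,v̄) = h. Then for every x ∈ so(n,ℂ) one has R([x,v], conj([x,v])) ≥ 0, where [x,v] = xv - vx and conj denotes entrywise complex conjugation; equivalently, the hermitian operator w ↦ -ad_{v̄} ∘ R ∘ ad_v (w) on so(n,ℂ) is positive semidefinite. -/

import Mathlib

/-!
The inequality is the second variation of `w ↦ R(w, w̄)` along orbits of `SO(n,ℂ)`.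

For skew-symmetric `x`, the curve `c(t) = exp(tx) v exp(-tx)` stays in `S`
(`exp_conj_mem`), so `t ↦ R(c(t), c̄(t))` has a minimum at `t = 0`. As `c' = [x, c]`, its second
derivative there is `2 H([x,v],[x,v]) + 2 H([x,[x,v]], v)`, where `H` is the real part of the
hermitian form `(a, b) ↦ R(a, b̄)`, and this is nonnegative (`second_variation_along`).

The unwanted term `H([x,[x,v]], v)` is removed by also moving in the direction `ix`: replacing `x`
by `ix` changes the sign of `[x,[x,v]]` but leaves `H([x,v],[x,v])` unchanged, because `H` is
invariant under multiplication by `i` (`hermRe_I_smul`). Adding the two inequalities gives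
`4 H([x,v],[x,v]) ≥ 0`.
-/

open Matrix

noncomputable section

/-- The real Lie algebra `so(n)` of skew-symmetric real `n × n` matrices, as a submodule of
the space of all real `n × n` matrices. -/
def soM (n : ℕ) : Submodule ℝ (Matrix (Fin n) (Fin n) ℝ) where
  carrier := {A | Aᵀ = -A}
  add_mem' := by
    intro a b ha hb
    simp only [Set.mem_setOf_eq] at *
    rw [Matrix.transpose_add, ha, hb, neg_add]
  zero_mem' := by simp
  smul_mem' := by
    intro c a ha
    simp only [Set.mem_setOf_eq] at *
    rw [Matrix.transpose_smul, ha, smul_neg]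

variable {n : ℕ}

/-- The invariant inner product `⟨A,B⟩ = -(1/2)·tr(AB)` on `so(n)`. -/
def soInner (A B : soM n) : ℝ :=
  -(1/2) * ((A : Matrix (Fin n) (Fin n) ℝ) * (B : Matrix (Fin n) (Fin n) ℝ)).trace

/-- Selfadjointness with respect to `soInner`. -/
def IsSA (R : soM n →ₗ[ℝ] soM n) : Prop :=
  ∀ A B : soM n, soInner (R A) B = soInner A (R B)

/-- The skew-symmetric part of a real matrix, as an element of `so(n)`;
on skew-symmetric matrices this is the identity. -/
def skewPart (A : Matrix (Fin n) (Fin n) ℝ) : soM n :=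
  ⟨(1/2 : ℝ) • (A - Aᵀ), by
    show ((1/2 : ℝ) • (A - Aᵀ))ᵀ = -((1/2 : ℝ) • (A - Aᵀ))
    rw [Matrix.transpose_smul, Matrix.transpose_sub, Matrix.transpose_transpose, ← smul_neg,
      neg_sub]⟩

/-- The real part of an element of `so(n,ℂ)`, as an element of `so(n)`. -/
def reSk (v : Matrix (Fin n) (Fin n) ℂ) : soM n := skewPart (v.map Complex.re)

/-- The imaginary part of an element of `so(n,ℂ)`, as an element of `so(n)`. -/
def imSk (v : Matrix (Fin n) (Fin n) ℂ) : soM n := skewPart (v.map Complex.im)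

/-- Entrywise complex conjugation `X ↦ X̄` on `so(n,ℂ)`. -/
def conjM (v : Matrix (Fin n) (Fin n) ℂ) : Matrix (Fin n) (Fin n) ℂ := v.map (starRingEnd ℂ)

/-- The unique `ℂ`-bilinear extension to `so(n,ℂ)` of a real bilinear form `B` on `so(n)`,
computed through real and imaginary parts. -/
def bilinC (B : soM n → soM n → ℝ) (v w : Matrix (Fin n) (Fin n) ℂ) : ℂ :=
  ((B (reSk v) (reSk w) - B (imSk v) (imSk w) : ℝ) : ℂ) +
    ((B (reSk v) (imSk w) + B (imSk v) (reSk w) : ℝ) : ℂ) * Complex.I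

/-- The value `R(v,w)` of the `ℂ`-bilinear extension of `(A,B) ↦ ⟨R A, B⟩` to `so(n,ℂ)`. -/
def qC (R : soM n →ₗ[ℝ] soM n) (v w : Matrix (Fin n) (Fin n) ℂ) : ℂ :=
  bilinC (fun a b => soInner (R a) b) v w

open ComplexOrder in
/-- The set `C(S,h)` of selfadjoint endomorphisms `R` of `so(n)` with `R(v,v̄) ≥ h`
for all `v ∈ S`. -/
def CSet (S : Set (Matrix (Fin n) (Fin n) ℂ)) (h : ℝ) : Set (soM n →ₗ[ℝ] soM n) :=
  {R | IsSA R ∧ ∀ v ∈ S, (h : ℂ) ≤ qC R v (conjM v)}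

/-- `ad_x : so(n) → so(n)`, `z ↦ xz - zx`. -/
def adM (x : soM n) : soM n →ₗ[ℝ] soM n where
  toFun z := ⟨(x : Matrix (Fin n) (Fin n) ℝ) * (z : Matrix (Fin n) (Fin n) ℝ)
      - (z : Matrix (Fin n) (Fin n) ℝ) * (x : Matrix (Fin n) (Fin n) ℝ), by
    have hx : (x : Matrix (Fin n) (Fin n) ℝ)ᵀ = -(x : Matrix (Fin n) (Fin n) ℝ) := x.2
    have hz : (z : Matrix (Fin n) (Fin n) ℝ)ᵀ = -(z : Matrix (Fin n) (Fin n) ℝ) := z.2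
    show ((x : Matrix (Fin n) (Fin n) ℝ) * (z : Matrix (Fin n) (Fin n) ℝ)
      - (z : Matrix (Fin n) (Fin n) ℝ) * (x : Matrix (Fin n) (Fin n) ℝ))ᵀ = _
    rw [Matrix.transpose_sub, Matrix.transpose_mul, Matrix.transpose_mul, hx, hz]
    simp only [Matrix.neg_mul, Matrix.mul_neg, neg_neg, neg_sub]⟩
  map_add' a b := by
    apply Subtype.ext
    simp only [Submodule.coe_add, Matrix.mul_add, Matrix.add_mul]
    abel
  map_smul' c a := by
    apply Subtype.ext
    simp only [SetLike.val_smul, RingHom.id_apply, Matrix.mul_smul, Matrix.smul_mul, smul_sub]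

/-- The bilinear form of `R^#`:
`⟨R^# x, y⟩ = -(1/2)·tr(ad_x ∘ R ∘ ad_y ∘ R)`, the trace being that of an
endomorphism of the vector space `so(n)`. -/
def sharpForm (R : soM n →ₗ[ℝ] soM n) (x y : soM n) : ℝ :=
  -(1/2) * LinearMap.trace ℝ (soM n) (adM x ∘ₗ R ∘ₗ adM y ∘ₗ R)

/-! ### The hermitian form attached to `R` -/

lemma reSk_add (v w : Matrix (Fin n) (Fin n) ℂ) : reSk (v + w) = reSk v + reSk w := by
  apply Subtype.ext; ext i j
  simp [reSk, skewPart]; ring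

lemma imSk_add (v w : Matrix (Fin n) (Fin n) ℂ) : imSk (v + w) = imSk v + imSk w := by
  apply Subtype.ext; ext i j
  simp [imSk, skewPart]; ring

lemma reSk_smul (r : ℝ) (v : Matrix (Fin n) (Fin n) ℂ) : reSk (r • v) = r • reSk v := by
  apply Subtype.ext; ext i j
  simp [reSk, skewPart]; ring

lemma imSk_smul (r : ℝ) (v : Matrix (Fin n) (Fin n) ℂ) : imSk (r • v) = r • imSk v := by
  apply Subtype.ext; ext i j
  simp [imSk, skewPart]; ring

lemma reSk_I_smul (v : Matrix (Fin n) (Fin n) ℂ) : reSk (Complex.I • v) = -imSk v := by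
  apply Subtype.ext; ext i j
  simp [reSk, imSk, skewPart]; ring

lemma imSk_I_smul (v : Matrix (Fin n) (Fin n) ℂ) : imSk (Complex.I • v) = reSk v := by
  apply Subtype.ext; ext i j
  simp [reSk, imSk, skewPart]

lemma reSk_conjM (v : Matrix (Fin n) (Fin n) ℂ) : reSk (conjM v) = reSk v := by
  apply Subtype.ext; ext i j
  simp [reSk, conjM, skewPart]

lemma imSk_conjM (v : Matrix (Fin n) (Fin n) ℂ) : imSk (conjM v) = -imSk v := by
  apply Subtype.ext; ext i j
  simp [imSk, conjM, skewPart]; ring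

lemma soInner_comm (A B : soM n) : soInner A B = soInner B A := by
  simp only [soInner, Matrix.trace_mul_comm (A : Matrix (Fin n) (Fin n) ℝ)]

lemma soInner_add_left (A B C : soM n) : soInner (A + B) C = soInner A C + soInner B C := by
  simp only [soInner, Submodule.coe_add, Matrix.add_mul, Matrix.trace_add]; ring

lemma soInner_smul_left (r : ℝ) (A C : soM n) : soInner (r • A) C = r * soInner A C := by
  simp only [soInner, SetLike.val_smul, Matrix.smul_mul, Matrix.trace_smul, smul_eq_mul]; ring

lemma soInner_add_right (A B C : soM n) : soInner A (B + C) = soInner A B + soInner A C := by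
  rw [soInner_comm, soInner_add_left, soInner_comm B, soInner_comm C]

lemma soInner_smul_right (r : ℝ) (A C : soM n) : soInner A (r • C) = r * soInner A C := by
  rw [soInner_comm, soInner_smul_left, soInner_comm C]

lemma soInner_neg_left (A C : soM n) : soInner (-A) C = -soInner A C := by
  simp [soInner]

lemma soInner_neg_right (A C : soM n) : soInner A (-C) = -soInner A C := by
  simp [soInner]

/-- The real part of the sesquilinear form `(v, w) ↦ R(v, w̄)` on complex matrices, as a real
bilinear form. It only sees the skew-symmetric parts of `v` and `w`. -/
def hermRe (R : soM n →ₗ[ℝ] soM n) :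
    Matrix (Fin n) (Fin n) ℂ →ₗ[ℝ] Matrix (Fin n) (Fin n) ℂ →ₗ[ℝ] ℝ :=
  LinearMap.mk₂ ℝ
    (fun v w => soInner (R (reSk v)) (reSk w) + soInner (R (imSk v)) (imSk w))
    (fun a b c => by
      simp only [reSk_add, imSk_add, map_add, soInner_add_left]; ring)
    (fun r a c => by
      simp only [reSk_smul, imSk_smul, map_smul, soInner_smul_left, smul_eq_mul]; ring)
    (fun a b c => by
      simp only [reSk_add, imSk_add, soInner_add_right]; ring)
    (fun r a c => by
      simp only [reSk_smul, imSk_smul, soInner_smul_right, smul_eq_mul]; ring)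

lemma hermRe_apply (R : soM n →ₗ[ℝ] soM n) (v w : Matrix (Fin n) (Fin n) ℂ) :
    hermRe R v w = soInner (R (reSk v)) (reSk w) + soInner (R (imSk v)) (imSk w) := rfl

lemma hermRe_comm {R : soM n →ₗ[ℝ] soM n} (hR : IsSA R) (v w : Matrix (Fin n) (Fin n) ℂ) :
    hermRe R v w = hermRe R w v := by
  rw [hermRe_apply, hermRe_apply, hR, hR, soInner_comm, soInner_comm (imSk v)]

lemma hermRe_I_smul (R : soM n →ₗ[ℝ] soM n) (v w : Matrix (Fin n) (Fin n) ℂ) :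
    hermRe R (Complex.I • v) (Complex.I • w) = hermRe R v w := by
  simp only [hermRe_apply, reSk_I_smul, imSk_I_smul, map_neg, soInner_neg_left,
    soInner_neg_right, neg_neg]
  ring

/-- Selfadjointness of `R` makes the imaginary part of `R(v, v̄)` vanish. -/
lemma qC_conjM_self {R : soM n →ₗ[ℝ] soM n} (hR : IsSA R) (v : Matrix (Fin n) (Fin n) ℂ) :
    qC R v (conjM v) = (hermRe R v v : ℂ) := by
  have hsymm : soInner (R (imSk v)) (reSk v) = soInner (R (reSk v)) (imSk v) := by
    rw [hR, soInner_comm]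
  simp only [qC, bilinC, reSk_conjM, imSk_conjM, soInner_neg_right, hsymm, hermRe_apply]
  simp

/-! ### Second-order necessary condition at a minimum -/

lemma second_deriv_nonneg_of_min {f f' : ℝ → ℝ} {f'' : ℝ} (hf : ∀ t, HasDerivAt f (f' t) t)
    (hf' : HasDerivAt f' f'' 0) (hmin : ∀ t, f 0 ≤ f t) : 0 ≤ f'' := by
  by_contra! hneg
  have hd : deriv f = f' := funext fun t => (hf t).deriv
  have hlocmin : IsLocalMin f 0 := Filter.Eventually.of_forall hmin
  have h0 : f' 0 = 0 := hlocmin.hasDerivAt_eq_zero (hf 0)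
  have hlocmax : IsLocalMax f 0 :=
    isLocalMax_of_deriv_deriv_neg (by rw [hd, hf'.deriv]; exact hneg) (by rw [hd, h0])
      (hf 0).continuousAt
  -- A local minimum that is also a local maximum forces `f`, hence `f'`, to be locally constant.
  have hconst : f =ᶠ[nhds 0] fun _ => f 0 := by
    filter_upwards [hlocmax] with t ht using le_antisymm ht (hmin t)
  have hderiv : f' =ᶠ[nhds 0] fun _ => 0 := by
    simpa [hd] using hconst.deriv
  have := hf'.unique ((hasDerivAt_const (0 : ℝ) (0 : ℝ)).congr_of_eventuallyEq hderiv)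
  exact hneg.ne this

/-! ### Orbits of one-parameter subgroups -/

open NormedSpace (exp)

/-- Conjugation by `exp x`, for skew-symmetric `x`, preserves every set invariant under
`SO(n,ℂ)`. -/
lemma exp_conj_mem {S : Set (Matrix (Fin n) (Fin n) ℂ)}
    (hSinv : ∀ g : Matrix (Fin n) (Fin n) ℂ, gᵀ * g = 1 → g.det = 1 →
      ∀ v ∈ S, g * v * g⁻¹ ∈ S)
    {x : Matrix (Fin n) (Fin n) ℂ} (hx : xᵀ = -x) {v : Matrix (Fin n) (Fin n) ℂ} (hv : v ∈ S) :
    exp x * v * exp (-x) ∈ S := by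
  have horth : ∀ y : Matrix (Fin n) (Fin n) ℂ, yᵀ = -y → (exp y)ᵀ * exp y = 1 := by
    intro y hy
    rw [← Matrix.exp_transpose, hy, ← Matrix.exp_add_of_commute _ _ (Commute.refl y).neg_left,
      neg_add_cancel, NormedSpace.exp_zero]
  -- Orthogonality gives `det (exp y) = ±1`; the sign is `+` since `exp x = exp (x/2) ^ 2`.
  have hdet : (exp x).det = 1 := by
    set y : Matrix (Fin n) (Fin n) ℂ := (1 / 2 : ℂ) • x with hy
    have hxy : x = y + y := by rw [hy, ← add_smul]; norm_num
    have h1 := congrArg Matrix.det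
      (horth y (by rw [hy, Matrix.transpose_smul, hx, smul_neg]))
    rw [Matrix.det_mul, Matrix.det_transpose, Matrix.det_one] at h1
    rw [hxy, Matrix.exp_add_of_commute _ _ (Commute.refl y), Matrix.det_mul, h1]
  rw [Matrix.exp_neg]
  exact hSinv _ (horth x hx) hdet v hv

/-- If `H(c, c)`, for a symmetric bilinear form `H`, is minimal at `t = 0` along the curve
`c(t) = exp(tx) v exp(-tx)`, then half its second derivative at `0` is nonnegative. -/
lemma second_variation_along {E : Type*} [NormedRing E] [NormedAlgebra ℝ E]
    [FiniteDimensional ℝ E] (H : E →ₗ[ℝ] E →ₗ[ℝ] ℝ) (hH : ∀ a b, H a b = H b a) (x v : E)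
    (hmin : ∀ t : ℝ, H v v ≤
      H (exp (t • x) * v * exp (-(t • x))) (exp (t • x) * v * exp (-(t • x)))) :
    0 ≤ H (x * (x * v - v * x) - (x * v - v * x) * x) v + H (x * v - v * x) (x * v - v * x) := by
  have : CompleteSpace E := FiniteDimensional.complete ℝ E
  set c : ℝ → E := fun t => exp (t • x) * v * exp (-(t • x)) with hc
  have hc0 : c 0 = v := by simp [hc]
  have hder : ∀ t, HasDerivAt c (x * c t - c t * x) t := by
    intro t
    have h1 : HasDerivAt (fun t : ℝ => exp (t • x)) (x * exp (t • x)) t :=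
      hasDerivAt_exp_smul_const' x t
    have h2 : HasDerivAt (fun t : ℝ => exp (-(t • x))) (-(exp (-(t • x)) * x)) t := by
      have := hasDerivAt_exp_smul_const (-x) t
      simpa only [smul_neg, mul_neg] using this
    refine ((h1.mul_const v).mul h2).congr_deriv ?_
    simp only [hc, mul_neg, ← sub_eq_add_neg, mul_assoc]
  have hder2 : ∀ t, HasDerivAt (fun t => x * c t - c t * x)
      (x * (x * c t - c t * x) - (x * c t - c t * x) * x) t := fun t =>
    ((hder t).const_mul x).sub ((hder t).mul_const x)
  have hbil : ∀ (a b : ℝ → E) (a' b' : E) (t : ℝ),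
      HasDerivAt a a' t → HasDerivAt b b' t →
      HasDerivAt (fun t => H (a t) (b t)) (H a' (b t) + H (a t) b') t := by
    intro a b a' b' t ha hb
    have h1 := (H.toContinuousBilinearMap.hasFDerivAt (x := a t)).comp_hasDerivAt t ha
    exact h1.clm_apply hb
  have key := second_deriv_nonneg_of_min (fun t => hbil c c _ _ t (hder t) (hder t))
    ((hbil _ c _ _ 0 (hder2 0) (hder 0)).add (hbil c _ _ _ 0 (hder 0) (hder2 0)))
    (fun t => by rw [hc0]; exact hmin t)
  rw [hc0, hH v] at key
  linarith

open ComplexOrder in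
/-- If `S ⊆ so(n,ℂ)` is `Ad_{SO(n,ℂ)}`-invariant, `R ∈ C(S,h)` and `v ∈ S`
satisfies `R(v,v̄) = h`, then `R([x,v], conj [x,v]) ≥ 0` for every `x ∈ so(n,ℂ)`. -/
theorem second_variation_nonneg (n : ℕ) (hn : 2 ≤ n)
    (S : Set (Matrix (Fin n) (Fin n) ℂ))
    (hSskew : ∀ v ∈ S, vᵀ = -v)
    (hSinv : ∀ g : Matrix (Fin n) (Fin n) ℂ, gᵀ * g = 1 → g.det = 1 →
      ∀ v ∈ S, g * v * g⁻¹ ∈ S)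
    (h : ℝ) (R : soM n →ₗ[ℝ] soM n) (hR : R ∈ CSet S h)
    (v : Matrix (Fin n) (Fin n) ℂ) (hv : v ∈ S)
    (heq : qC R v (conjM v) = (h : ℂ)) :
    ∀ x : Matrix (Fin n) (Fin n) ℂ, xᵀ = -x →
      (0 : ℂ) ≤ qC R (x * v - v * x) (conjM (x * v - v * x)) := by
  intro x hx
  have hSA : IsSA R := hR.1
  have hQv : hermRe R v v = h := by
    rw [qC_conjM_self hSA] at heq
    exact_mod_cast heq
  have hQS : ∀ w ∈ S, hermRe R v v ≤ hermRe R w w := by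
    intro w hw
    have := hR.2 w hw
    rw [qC_conjM_self hSA] at this
    rw [hQv]
    exact_mod_cast this
  have hvar : ∀ y : Matrix (Fin n) (Fin n) ℂ, yᵀ = -y →
      0 ≤ hermRe R (y * (y * v - v * y) - (y * v - v * y) * y) v
        + hermRe R (y * v - v * y) (y * v - v * y) := fun y hy =>
    open scoped Matrix.Norms.Operator in second_variation_along (hermRe R) (hermRe_comm hSA) y v fun t =>
      hQS _ (exp_conj_mem hSinv (by rw [Matrix.transpose_smul, hy, smul_neg]) hv)
  have h1 := hvar x hx
  have h2 := hvar (Complex.I • x) (by rw [Matrix.transpose_smul, hx, smul_neg])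
  have e1 : (Complex.I • x) * v - v * (Complex.I • x) = Complex.I • (x * v - v * x) := by
    rw [Matrix.smul_mul, Matrix.mul_smul, smul_sub]
  have e2 : (Complex.I • x) * (Complex.I • (x * v - v * x))
      - (Complex.I • (x * v - v * x)) * (Complex.I • x)
      = -(x * (x * v - v * x) - (x * v - v * x) * x) := by
    simp only [Matrix.smul_mul, Matrix.mul_smul, smul_smul, Complex.I_mul_I, neg_smul, one_smul]
    abel
  rw [e1, e2, hermRe_I_smul, map_neg, LinearMap.neg_apply] at h2
  rw [qC_conjM_self hSA]
  have h3 : 0 ≤ hermRe R (x * v - v * x) (x * v - v * x) := by linarith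
  exact_mod_cast h3

end
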